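/- arXiv:1708.02521 — 4 statements merged into one kernel-verified Lean document; each statement's English description precedes it below -/
import Mathlib

section
/- Let g : E → ℝ be twice Fréchet differentiable and suppose that sup_{w∈E} |g(w)|/(1+‖w‖³) < ∞ and that there is a constant k_g with ‖D²g(w+h) − D²g(w)‖ ≤ k_g‖h‖ for all w,h ∈ E. Then sup_{w∈E} ‖Dg(w)‖/(1+‖w‖²) < ∞ and sup_{w∈E} ‖D²g(w)‖/(1+‖w‖) < ∞; in particular ‖g‖_M < ∞. -/
/-- Let `E` be a real Banach space and `g : E → ℝ` twice Fréchet
differentiable. If `sup_w |g w| / (1 + ‖w‖³) < ∞` and `‖D²g(w+h) − D²g(w)‖ ≤ k_g ‖h‖`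
for all `w, h`, then `sup_w ‖Dg w‖ / (1 + ‖w‖²) < ∞` and `sup_w ‖D²g w‖ / (1 + ‖w‖) < ∞`;
in particular `‖g‖_M < ∞`. -/
theorem stmt_0 {E : Type*} [NormedAddCommGroup E] [NormedSpace ℝ E] [CompleteSpace E]
    (g : E → ℝ)
    (hg₁ : Differentiable ℝ g)
    (hg₂ : Differentiable ℝ (fderiv ℝ g))
    (C₀ : ℝ) (hC₀ : ∀ w : E, |g w| ≤ C₀ * (1 + ‖w‖ ^ 3))
    (kg : ℝ)
    (hkg : ∀ w h : E,
      ‖fderiv ℝ (fderiv ℝ g) (w + h) - fderiv ℝ (fderiv ℝ g) w‖ ≤ kg * ‖h‖) :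
    (∃ C₁ : ℝ, ∀ w : E, ‖fderiv ℝ g w‖ ≤ C₁ * (1 + ‖w‖ ^ 2)) ∧
    (∃ C₂ : ℝ, ∀ w : E, ‖fderiv ℝ (fderiv ℝ g) w‖ ≤ C₂ * (1 + ‖w‖)) := by
  have h2 : ∀ w : E, ‖fderiv ℝ (fderiv ℝ g) w‖ ≤
      (‖fderiv ℝ (fderiv ℝ g) 0‖ + |kg|) * (1 + ‖w‖) := by
    intro w
    have h := hkg 0 w
    rw [zero_add] at h
    have h' := norm_sub_norm_le (fderiv ℝ (fderiv ℝ g) w) (fderiv ℝ (fderiv ℝ g) 0)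
    have h3 : kg * ‖w‖ ≤ |kg| * ‖w‖ := by gcongr; exact le_abs_self kg
    have h4 : 0 ≤ ‖fderiv ℝ (fderiv ℝ g) 0‖ * ‖w‖ := by positivity
    have h5 := abs_nonneg kg
    linarith
  refine ⟨?_, _, h2⟩
  set C := ‖fderiv ℝ (fderiv ℝ g) 0‖ + |kg| with hC
  have hC0 : 0 ≤ C := by positivity
  refine ⟨‖fderiv ℝ g 0‖ + 2 * C, fun w => ?_⟩
  have key : ‖fderiv ℝ g w - fderiv ℝ g 0‖ ≤ C * (1 + ‖w‖) * ‖w - 0‖ := by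
    refine (convex_closedBall (0 : E) ‖w‖).norm_image_sub_le_of_norm_fderiv_le (𝕜 := ℝ)
      (fun x _ => hg₂ x) (fun x hx => ?_) (by simp) (by simp)
    refine (h2 x).trans ?_
    have : ‖x‖ ≤ ‖w‖ := by simpa using hx
    gcongr
  rw [sub_zero] at key
  have h' := norm_sub_norm_le (fderiv ℝ g w) (fderiv ℝ g 0)
  have h4 : 0 ≤ ‖fderiv ℝ g 0‖ * ‖w‖ ^ 2 := by positivity
  have h5 : (1 + ‖w‖) * ‖w‖ ≤ 2 * (1 + ‖w‖ ^ 2) := by nlinarith [sq_nonneg (‖w‖ - 1)]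
  have h6 := mul_le_mul_of_nonneg_left h5 hC0
  linarith
end

section
/- Let f ∈ M. Then for every w ∈ E, lim_{u→0+} u^{−1}((T_u f)(w) − f(w)) = −Df(w)[w] + E[D²f(w)[D,D]]. (This identifies the action of the infinitesimal generator of the Ornstein–Uhlenbeck-type process with stationary law that of D on test functions in M.) -/
open MeasureTheory ProbabilityTheory

lemma aux_taylor {E : Type*} [NormedAddCommGroup E] [NormedSpace ℝ E]
    (f : E → ℝ) (hf₁ : Differentiable ℝ f) (hf₂ : Differentiable ℝ (fderiv ℝ f))
    (k : ℝ) (hk : 0 ≤ k)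
    (hkf : ∀ w h : E,
      ‖fderiv ℝ (fderiv ℝ f) (w + h) - fderiv ℝ (fderiv ℝ f) w‖ ≤ k * ‖h‖) (w h : E) :
    |f (w + h) - f w - fderiv ℝ f w h - 1 / 2 * fderiv ℝ (fderiv ℝ f) w h h| ≤ k * ‖h‖ ^ 3 := by
  set B := fderiv ℝ (fderiv ℝ f) w with hB
  have hline : ∀ t : ℝ, HasDerivAt (fun t : ℝ => w + t • h) h t := fun t => by
    simpa using ((hasDerivAt_id t).smul_const h).const_add w
  have h1 : ∀ t ∈ Set.Icc (0 : ℝ) 1,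
      ‖fderiv ℝ f (w + t • h) - fderiv ℝ f w - t • B h‖ ≤ k * ‖h‖ ^ 2 := by
    intro t ht
    have hd : ∀ s ∈ Set.Icc (0 : ℝ) 1, HasDerivWithinAt
        (fun s : ℝ => fderiv ℝ f (w + s • h) - s • B h)
        (fderiv ℝ (fderiv ℝ f) (w + s • h) h - B h) (Set.Icc 0 1) s := by
      intro s _
      have a := (hf₂ (w + s • h)).hasFDerivAt.comp_hasDerivAt s (hline s)
      have b := (hasDerivAt_id s).smul_const (B h)
      refine ((a.sub b).congr_deriv ?_).hasDerivWithinAt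
      simp
    have hb : ∀ s ∈ Set.Icc (0 : ℝ) 1,
        ‖fderiv ℝ (fderiv ℝ f) (w + s • h) h - B h‖ ≤ k * ‖h‖ ^ 2 := by
      intro s hs
      have e : ‖s • h‖ ≤ ‖h‖ := by
        rw [norm_smul, Real.norm_of_nonneg hs.1]
        exact mul_le_of_le_one_left (norm_nonneg _) hs.2
      calc _ = ‖(fderiv ℝ (fderiv ℝ f) (w + s • h) - B) h‖ := by simp
        _ ≤ ‖fderiv ℝ (fderiv ℝ f) (w + s • h) - B‖ * ‖h‖ := ContinuousLinearMap.le_opNorm _ _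
        _ ≤ (k * ‖h‖) * ‖h‖ := by
            gcongr
            exact (hkf _ _).trans (by gcongr)
        _ = _ := by ring
    have := (convex_Icc (0 : ℝ) 1).norm_image_sub_le_of_norm_hasDerivWithin_le hd hb
      (Set.left_mem_Icc.2 zero_le_one) ht
    simp only [zero_smul, add_zero, sub_zero] at this
    rw [Real.norm_of_nonneg ht.1] at this
    rw [sub_right_comm]
    exact this.trans (mul_le_of_le_one_right (by positivity) ht.2)
  have hd : ∀ s ∈ Set.Icc (0 : ℝ) 1, HasDerivWithinAt
      (fun s : ℝ => f (w + s • h) - s * fderiv ℝ f w h - s ^ 2 / 2 * B h h)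
      ((fderiv ℝ f (w + s • h) - fderiv ℝ f w - s • B h) h) (Set.Icc 0 1) s := by
    intro s _
    have a := (hf₁ (w + s • h)).hasFDerivAt.comp_hasDerivAt s (hline s)
    have b := (hasDerivAt_id s).mul_const (fderiv ℝ f w h)
    have c := ((hasDerivAt_pow 2 s).div_const 2).mul_const (B h h)
    refine (((a.sub b).sub c).congr_deriv ?_).hasDerivWithinAt
    simp
  have := (convex_Icc (0 : ℝ) 1).norm_image_sub_le_of_norm_hasDerivWithin_le (C := k * ‖h‖ ^ 3)
    hd (fun s hs => by
      refine (ContinuousLinearMap.le_opNorm _ _).trans ?_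
      calc _ ≤ (k * ‖h‖ ^ 2) * ‖h‖ := by gcongr; exact h1 s hs
        _ = _ := by ring)
      (Set.left_mem_Icc.2 zero_le_one) (Set.right_mem_Icc.2 zero_le_one)
  simp only [one_smul, zero_smul, add_zero, sub_zero, norm_one, mul_one, Real.norm_eq_abs] at this
  convert this using 2
  ring

lemma aux_expand {E : Type*} [NormedAddCommGroup E] [NormedSpace ℝ E] [CompleteSpace E]
    {Ω : Type*} [MeasurableSpace Ω] (P : Measure Ω) [IsProbabilityMeasure P]
    (D : Ω → E) (hDmeas : AEStronglyMeasurable D P)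
    (hD3 : Integrable (fun ω => ‖D ω‖ ^ 3) P)
    (hDmean : (∫ ω, D ω ∂P) = 0)
    (f : E → ℝ) (hf₁ : Differentiable ℝ f)
    (k : ℝ) (w : E) (hk : 0 ≤ k) (A : E →L[ℝ] ℝ) (B : E →L[ℝ] E →L[ℝ] ℝ)
    (hT : ∀ h, |f (w + h) - f w - A h - 1 / 2 * B h h| ≤ k * ‖h‖ ^ 3) (a s : ℝ) :
    |(∫ ω, f (w + (a • w + s • D ω)) ∂P) - f w
      - (a * A w + 1 / 2 * (a ^ 2 * B w w + s ^ 2 * ∫ ω, B (D ω) (D ω) ∂P))|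
      ≤ 4 * k * (|a| ^ 3 * ‖w‖ ^ 3 + |s| ^ 3 * ∫ ω, ‖D ω‖ ^ 3 ∂P) := by
  have hL3 : MemLp D 3 P := by
    refine (integrable_norm_rpow_iff hDmeas (by norm_num) (by norm_num)).1 ?_
    have : (3 : ENNReal).toReal = ((3 : ℕ) : ℝ) := by norm_num
    simpa only [this, Real.rpow_natCast] using hD3
  have hL1 : Integrable D P := hL3.integrable (by norm_num)
  have hL2 : Integrable (fun ω => ‖D ω‖ ^ 2) P :=
    (hL3.mono_exponent (by norm_num : (2 : ENNReal) ≤ 3)).integrable_norm_pow (by norm_num)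
  have iA : Integrable (fun ω => A (D ω)) P := A.integrable_comp hL1
  have iB1 : Integrable (fun ω => B w (D ω)) P := (B w).integrable_comp hL1
  have iB2 : Integrable (fun ω => B (D ω) w) P := (B.flip w).integrable_comp hL1
  have zA : ∫ ω, A (D ω) ∂P = 0 := by rw [A.integral_comp_comm hL1, hDmean, map_zero]
  have zB1 : ∫ ω, B w (D ω) ∂P = 0 := by rw [(B w).integral_comp_comm hL1, hDmean, map_zero]
  have zB2 : ∫ ω, B (D ω) w ∂P = 0 := by
    have := (B.flip w).integral_comp_comm hL1
    rw [hDmean, map_zero] at this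
    exact this
  have hBc : Continuous (fun x => B x x) := by fun_prop
  have iBB : Integrable (fun ω => B (D ω) (D ω)) P := by
    refine (hL2.const_mul ‖B‖).mono' (hBc.comp_aestronglyMeasurable hDmeas) ?_
    filter_upwards with ω
    rw [pow_two, ← mul_assoc]
    exact B.le_opNorm₂ _ _
  set M : Ω → ℝ := fun ω => f w + a * A w + 1 / 2 * a ^ 2 * B w w + (s * A (D ω)
    + (1 / 2 * a * s) * B w (D ω) + (1 / 2 * a * s) * B (D ω) w
    + (1 / 2 * s ^ 2) * B (D ω) (D ω)) with hM
  have i1 := iA.const_mul s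
  have i2 := iB1.const_mul (1 / 2 * a * s)
  have i3 := iB2.const_mul (1 / 2 * a * s)
  have i4 := iBB.const_mul (1 / 2 * s ^ 2)
  have iM : Integrable M P := (integrable_const _).add (((i1.add i2).add i3).add i4)
  have eM : ∫ ω, M ω ∂P = f w + a * A w + 1 / 2 * a ^ 2 * B w w
      + 1 / 2 * s ^ 2 * ∫ ω, B (D ω) (D ω) ∂P := by
    have j2 : Integrable (fun ω => s * A (D ω) + (1 / 2 * a * s) * B w (D ω)) P := i1.add i2
    have j3 : Integrable (fun ω => s * A (D ω) + (1 / 2 * a * s) * B w (D ω)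
      + (1 / 2 * a * s) * B (D ω) w) P := j2.add i3
    have j4 : Integrable (fun ω => s * A (D ω) + (1 / 2 * a * s) * B w (D ω)
      + (1 / 2 * a * s) * B (D ω) w + (1 / 2 * s ^ 2) * B (D ω) (D ω)) P := j3.add i4
    simp only [hM]
    rw [integral_add (integrable_const _) j4,
      integral_add j3 i4, integral_add j2 i3, integral_add i1 i2]
    simp only [integral_const_mul, zA, zB1, zB2]
    simp
  set R : Ω → ℝ := fun ω => f (w + (a • w + s • D ω)) - M ω with hR
  have iG : Integrable (fun ω => 4 * k * (|a| ^ 3 * ‖w‖ ^ 3 + |s| ^ 3 * ‖D ω‖ ^ 3)) P :=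
    ((integrable_const _).add (hD3.const_mul _)).const_mul _
  have hRb : ∀ ω, ‖R ω‖ ≤ 4 * k * (|a| ^ 3 * ‖w‖ ^ 3 + |s| ^ 3 * ‖D ω‖ ^ 3) := by
    intro ω
    have h1 := hT (a • w + s • D ω)
    have h2 : R ω = f (w + (a • w + s • D ω)) - f w - A (a • w + s • D ω)
        - 1 / 2 * B (a • w + s • D ω) (a • w + s • D ω) := by
      simp [hR, hM]; ring
    rw [h2, Real.norm_eq_abs]
    refine h1.trans ?_
    have h3 : ‖a • w + s • D ω‖ ≤ |a| * ‖w‖ + |s| * ‖D ω‖ := by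
      refine (norm_add_le _ _).trans ?_
      simp [norm_smul]
    have h4 : ‖a • w + s • D ω‖ ^ 3 ≤ (|a| * ‖w‖ + |s| * ‖D ω‖) ^ 3 := by gcongr
    have h5 : ∀ x y : ℝ, 0 ≤ x → 0 ≤ y → (x + y) ^ 3 ≤ 4 * (x ^ 3 + y ^ 3) := by
      intro x y hx hy
      nlinarith [mul_nonneg (add_nonneg hx hy) (sq_nonneg (x - y))]
    have h6 := h5 (|a| * ‖w‖) (|s| * ‖D ω‖) (by positivity) (by positivity)
    calc _ ≤ k * (4 * ((|a| * ‖w‖) ^ 3 + (|s| * ‖D ω‖) ^ 3)) := by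
            gcongr; exact h4.trans h6
      _ = _ := by ring
  have hfc : Continuous (fun x => f (w + (a • w + s • x))) := by
    have := hf₁.continuous
    fun_prop
  have iR : Integrable R P :=
    iG.mono' ((hfc.comp_aestronglyMeasurable hDmeas).sub iM.aestronglyMeasurable)
      (Filter.Eventually.of_forall hRb)
  have e1 : ∫ ω, f (w + (a • w + s • D ω)) ∂P = ∫ ω, R ω ∂P + ∫ ω, M ω ∂P := by
    rw [← integral_add iR iM]
    simp [hR]
  have e2 := norm_integral_le_of_norm_le iG (Filter.Eventually.of_forall hRb)
  rw [integral_const_mul, integral_add (integrable_const _) (hD3.const_mul _),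
    integral_const_mul, integral_const, Real.norm_eq_abs] at e2
  simp only [probReal_univ, one_smul, integral_const_mul] at e2
  rw [e1, eM]
  refine le_trans (le_of_eq ?_) e2
  congr 1
  ring

lemma aux_lim1 (c : ℝ) : Filter.Tendsto (fun u : ℝ => u⁻¹ * (Real.exp (c * u) - 1))
    (nhdsWithin 0 (Set.Ioi 0)) (nhds c) := by
  have h : HasDerivAt (fun u : ℝ => Real.exp (c * u)) c 0 := by
    have := ((hasDerivAt_id (0 : ℝ)).const_mul c).exp
    simpa using this
  have h2 := h.tendsto_slope_zero_right
  simpa using h2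

/-- In the setting of the Mehler-type semigroup
`(T_u f)(w) = E[f(e^{-u} w + σ(u) D)]`, `σ(u) = √(1−e^{−2u})`, for every `f ∈ M` and `w ∈ E`,
`lim_{u→0+} u⁻¹ ((T_u f)(w) − f(w)) = −Df(w)[w] + E[D²f(w)[D,D]]`. -/
theorem stmt_2 {E : Type*} [NormedAddCommGroup E] [NormedSpace ℝ E] [CompleteSpace E]
    [TopologicalSpace.SeparableSpace E]
    {Ω : Type*} [MeasureSpace Ω] [IsProbabilityMeasure (ℙ : Measure Ω)]
    (D : Ω → E) (hDmeas : AEStronglyMeasurable D ℙ)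
    (hD3 : Integrable (fun ω => ‖D ω‖ ^ 3) ℙ)
    (hDmean : (∫ ω, D ω ∂ℙ) = 0)
    (f : E → ℝ)
    (hf₁ : Differentiable ℝ f)
    (hf₂ : Differentiable ℝ (fderiv ℝ f))
    (C₀ : ℝ) (hC₀ : ∀ w : E, |f w| ≤ C₀ * (1 + ‖w‖ ^ 3))
    (kf : ℝ)
    (hkf : ∀ w h : E,
      ‖fderiv ℝ (fderiv ℝ f) (w + h) - fderiv ℝ (fderiv ℝ f) w‖ ≤ kf * ‖h‖)
    (w : E) :
    Filter.Tendsto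
      (fun u : ℝ =>
        u⁻¹ * ((∫ ω, f (Real.exp (-u) • w + Real.sqrt (1 - Real.exp (-2 * u)) • D ω) ∂ℙ)
          - f w))
      (nhdsWithin 0 (Set.Ioi 0))
      (nhds (-(fderiv ℝ f w w) + ∫ ω, ((fderiv ℝ (fderiv ℝ f) w) (D ω)) (D ω) ∂ℙ)) := by
  set A := fderiv ℝ f w with hA
  set B := fderiv ℝ (fderiv ℝ f) w with hB
  set I := ∫ ω, (B (D ω)) (D ω) ∂ℙ with hI
  set J := ∫ ω, ‖D ω‖ ^ 3 ∂ℙ with hJ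
  have hT := aux_taylor f hf₁ hf₂ |kf| (abs_nonneg _)
    (fun w h => (hkf w h).trans (by gcongr; exact le_abs_self _)) w
  have key := aux_expand ℙ D hDmeas hD3 hDmean f hf₁ |kf| w (abs_nonneg _) A B hT
  have l1 : Filter.Tendsto (fun u : ℝ => u⁻¹ * (Real.exp (-u) - 1))
      (nhdsWithin 0 (Set.Ioi 0)) (nhds (-1)) := by simpa using aux_lim1 (-1)
  have l2 : Filter.Tendsto (fun u : ℝ => u⁻¹ * (1 - Real.exp (-2 * u)))
      (nhdsWithin 0 (Set.Ioi 0)) (nhds 2) := by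
    have := (aux_lim1 (-2)).neg
    simp only [neg_neg] at this
    refine this.congr fun u => by ring
  have l3 : Filter.Tendsto (fun u : ℝ => Real.exp (-u) - 1)
      (nhdsWithin 0 (Set.Ioi 0)) (nhds 0) := by
    have : Continuous (fun u : ℝ => Real.exp (-u) - 1) := by fun_prop
    simpa using (this.tendsto 0).mono_left nhdsWithin_le_nhds
  have l4 : Filter.Tendsto (fun u : ℝ => Real.sqrt (1 - Real.exp (-2 * u)))
      (nhdsWithin 0 (Set.Ioi 0)) (nhds 0) := by
    have : Continuous (fun u : ℝ => Real.sqrt (1 - Real.exp (-2 * u))) := by fun_prop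
    simpa using (this.tendsto 0).mono_left nhdsWithin_le_nhds
  have hmain : Filter.Tendsto (fun u : ℝ => (u⁻¹ * (Real.exp (-u) - 1)) * A w
      + 1 / 2 * ((u⁻¹ * (Real.exp (-u) - 1)) * (Real.exp (-u) - 1) * B w w
        + (u⁻¹ * (1 - Real.exp (-2 * u))) * I))
      (nhdsWithin 0 (Set.Ioi 0)) (nhds (-(A w) + I)) := by
    have := (l1.mul_const (A w)).add
      ((((l1.mul l3).mul_const (B w w)).add (l2.mul_const I)).const_mul (1 / 2))
    convert this using 2
    ring
  have hbd : Filter.Tendsto (fun u : ℝ => 4 * |kf| *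
      (|u⁻¹ * (Real.exp (-u) - 1)| * |Real.exp (-u) - 1| ^ 2 * ‖w‖ ^ 3
        + (u⁻¹ * (1 - Real.exp (-2 * u))) * Real.sqrt (1 - Real.exp (-2 * u)) * J))
      (nhdsWithin 0 (Set.Ioi 0)) (nhds 0) := by
    have := ((((l1.abs.mul (l3.abs.pow 2)).mul_const (‖w‖ ^ 3))).add
      ((l2.mul l4).mul_const J)).const_mul (4 * |kf|)
    convert this using 2
    simp
  have hdiff := squeeze_zero_norm' (f := fun u : ℝ =>
      u⁻¹ * ((∫ ω, f (Real.exp (-u) • w + Real.sqrt (1 - Real.exp (-2 * u)) • D ω) ∂ℙ) - f w)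
      - ((u⁻¹ * (Real.exp (-u) - 1)) * A w
      + 1 / 2 * ((u⁻¹ * (Real.exp (-u) - 1)) * (Real.exp (-u) - 1) * B w w
        + (u⁻¹ * (1 - Real.exp (-2 * u))) * I))) ?_ hbd
  · have := hdiff.add hmain
    simpa using this
  · filter_upwards [self_mem_nhdsWithin] with u hu
    have hu : 0 < u := hu
    have hs : 0 ≤ 1 - Real.exp (-2 * u) := by
      have : Real.exp (-2 * u) ≤ 1 := Real.exp_le_one_iff.2 (by linarith)
      linarith
    have k1 := key (Real.exp (-u) - 1) (Real.sqrt (1 - Real.exp (-2 * u)))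
    have e : ∀ ω, w + ((Real.exp (-u) - 1) • w + Real.sqrt (1 - Real.exp (-2 * u)) • D ω)
        = Real.exp (-u) • w + Real.sqrt (1 - Real.exp (-2 * u)) • D ω := by
      intro ω; module
    simp only [e] at k1
    have hsq := Real.sq_sqrt hs
    rw [abs_of_nonneg (Real.sqrt_nonneg _), pow_succ (Real.sqrt _) 2, hsq] at k1
    have k2 := mul_le_mul_of_nonneg_left k1 (inv_nonneg.2 hu.le)
    rw [← abs_of_nonneg (inv_nonneg.2 hu.le), ← abs_mul, abs_of_nonneg (inv_nonneg.2 hu.le)] at k2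
    rw [Real.norm_eq_abs, abs_mul u⁻¹, abs_of_nonneg (inv_nonneg.2 hu.le)]
    refine le_trans (le_of_eq ?_) (k2.trans (le_of_eq ?_))
    · congr 1; ring
    · ring
end

section
/- Let g ∈ M satisfy E[g(D)] = 0. Then for every w ∈ E the integral φ(g)(w) := −∫₀^∞ (T_u g)(w) du converges absolutely, the function φ(g) : E → ℝ is twice Fréchet differentiable, and for k = 1,2 and every w ∈ E, D^k φ(g)(w) = −∫₀^∞ e^{−ku} E[D^k g(w e^{−u} + σ(u) D)] du, the integral being a Bochner integral in the Banach space of continuous k-linear forms on E. -/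
open MeasureTheory ProbabilityTheory

lemma aux_xnorm {E : Type*} [NormedAddCommGroup E] [NormedSpace ℝ E] (w d : E) (u : ℝ)
    (hu : 0 < u) :
    ‖Real.exp (-u) • w + Real.sqrt (1 - Real.exp (-2 * u)) • d‖ ≤ ‖w‖ + ‖d‖ := by
  have h1 : Real.exp (-u) ≤ 1 := Real.exp_le_one_iff.2 (by linarith)
  have h2 : Real.sqrt (1 - Real.exp (-2 * u)) ≤ 1 := by
    refine Real.sqrt_le_iff.2 ⟨zero_le_one, ?_⟩
    linarith [Real.exp_pos (-2 * u)]
  refine (norm_add_le _ _).trans ?_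
  rw [norm_smul, norm_smul, Real.norm_of_nonneg (Real.exp_pos _).le,
    Real.norm_of_nonneg (Real.sqrt_nonneg _)]
  have := mul_le_mul_of_nonneg_right h1 (norm_nonneg w)
  have := mul_le_mul_of_nonneg_right h2 (norm_nonneg d)
  linarith

lemma aux_xdiff {E : Type*} [NormedAddCommGroup E] [NormedSpace ℝ E] (w d : E) (u : ℝ)
    (hu : 0 < u) :
    ‖Real.exp (-u) • w + Real.sqrt (1 - Real.exp (-2 * u)) • d - d‖
      ≤ Real.exp (-u) * (‖w‖ + ‖d‖) := by
  have h1 : Real.exp (-u) ≤ 1 := Real.exp_le_one_iff.2 (by linarith)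
  have h0 := Real.exp_pos (-u)
  have h2 : Real.exp (-2 * u) = Real.exp (-u) * Real.exp (-u) := by
    rw [← Real.exp_add]; ring_nf
  have h3 : Real.sqrt (1 - Real.exp (-2 * u)) ≤ 1 := by
    refine Real.sqrt_le_iff.2 ⟨zero_le_one, ?_⟩
    linarith [Real.exp_pos (-2 * u)]
  have h4 : 1 - Real.exp (-u) ≤ Real.sqrt (1 - Real.exp (-2 * u)) := by
    apply Real.le_sqrt_of_sq_le
    rw [h2]; nlinarith
  have e : Real.exp (-u) • w + Real.sqrt (1 - Real.exp (-2 * u)) • d - d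
      = Real.exp (-u) • w - (1 - Real.sqrt (1 - Real.exp (-2 * u))) • d := by
    rw [sub_smul, one_smul]; abel
  rw [e]
  refine (norm_sub_le _ _).trans ?_
  rw [norm_smul, norm_smul, Real.norm_of_nonneg h0.le,
    Real.norm_of_nonneg (by linarith : 0 ≤ 1 - Real.sqrt (1 - Real.exp (-2 * u)))]
  have := mul_le_mul_of_nonneg_right
    (by linarith : 1 - Real.sqrt (1 - Real.exp (-2 * u)) ≤ Real.exp (-u)) (norm_nonneg d)
  linarith

lemma aux_meas {E : Type*} [NormedAddCommGroup E] [NormedSpace ℝ E]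
    {Ω : Type*} [MeasureSpace Ω] [IsProbabilityMeasure (ℙ : Measure Ω)]
    (D : Ω → E) (hDmeas : AEStronglyMeasurable D ℙ) (w : E) :
    AEStronglyMeasurable (fun z : ℝ × Ω =>
      Real.exp (-z.1) • w + Real.sqrt (1 - Real.exp (-2 * z.1)) • D z.2)
      ((volume.restrict (Set.Ioi (0 : ℝ))).prod ℙ) := by
  have h1 : AEStronglyMeasurable (fun z : ℝ × Ω => Real.exp (-z.1) • w)
      ((volume.restrict (Set.Ioi (0 : ℝ))).prod ℙ) := by
    have : Continuous fun u : ℝ => Real.exp (-u) • w := by fun_prop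
    exact (this.aestronglyMeasurable (μ := volume.restrict (Set.Ioi (0 : ℝ)))).comp_fst
  have h2 : AEStronglyMeasurable (fun z : ℝ × Ω => Real.sqrt (1 - Real.exp (-2 * z.1)))
      ((volume.restrict (Set.Ioi (0 : ℝ))).prod ℙ) := by
    have : Continuous fun u : ℝ => Real.sqrt (1 - Real.exp (-2 * u)) := by fun_prop
    exact (this.aestronglyMeasurable (μ := volume.restrict (Set.Ioi (0 : ℝ)))).comp_fst
  exact h1.add (h2.smul hDmeas.comp_snd)

lemma aux_cube {E : Type*} [NormedAddCommGroup E] [NormedSpace ℝ E]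
    {Ω : Type*} [MeasureSpace Ω] [IsProbabilityMeasure (ℙ : Measure Ω)]
    (D : Ω → E) (hDmeas : AEStronglyMeasurable D ℙ)
    (hD3 : Integrable (fun ω => ‖D ω‖ ^ 3) ℙ) (r : ℝ) (hr : 0 ≤ r) :
    Integrable (fun ω => (r + ‖D ω‖) ^ 3) ℙ := by
  refine Integrable.mono' (g := fun ω => 4 * (r ^ 3 + ‖D ω‖ ^ 3))
    (((integrable_const _).add hD3).const_mul 4) ?_ ?_
  · have : Continuous fun x : E => (r + ‖x‖) ^ 3 := by fun_prop
    exact this.comp_aestronglyMeasurable hDmeas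
  · refine Filter.Eventually.of_forall fun ω => ?_
    have h := norm_nonneg (D ω)
    rw [Real.norm_of_nonneg (by positivity)]
    nlinarith [mul_nonneg (add_nonneg hr h) (sq_nonneg (r - ‖D ω‖))]

lemma aux_bound {E : Type*} [NormedAddCommGroup E] [NormedSpace ℝ E]
    {Ω : Type*} [MeasureSpace Ω] [IsProbabilityMeasure (ℙ : Measure Ω)]
    (D : Ω → E) (hDmeas : AEStronglyMeasurable D ℙ)
    (hD3 : Integrable (fun ω => ‖D ω‖ ^ 3) ℙ) (r A : ℝ) (hr : 0 ≤ r) :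
    Integrable (fun z : ℝ × Ω => Real.exp (-z.1) * (A * (r + ‖D z.2‖) ^ 3))
      ((volume.restrict (Set.Ioi (0 : ℝ))).prod ℙ) := by
  have h1 : Integrable (fun u : ℝ => Real.exp (-u)) (volume.restrict (Set.Ioi (0 : ℝ))) :=
    integrableOn_exp_neg_Ioi 0
  exact h1.mul_prod ((aux_cube D hDmeas hD3 r hr).const_mul A)

lemma aux_pos {Ω : Type*} [MeasureSpace Ω] [IsProbabilityMeasure (ℙ : Measure Ω)] :
    ∀ᵐ z : ℝ × Ω ∂((volume.restrict (Set.Ioi (0 : ℝ))).prod ℙ), 0 < z.1 := by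
  have h : ∀ᵐ u : ℝ ∂(volume.restrict (Set.Ioi (0 : ℝ))), 0 < u :=
    ae_restrict_mem measurableSet_Ioi
  exact Measure.quasiMeasurePreserving_fst.ae h

lemma aux_deriv {E F : Type*} [NormedAddCommGroup E] [NormedSpace ℝ E]
    [NormedAddCommGroup F] [NormedSpace ℝ F]
    {Ω : Type*} [MeasureSpace Ω] [IsProbabilityMeasure (ℙ : Measure Ω)]
    (D : Ω → E) (hDmeas : AEStronglyMeasurable D ℙ)
    (hD3 : Integrable (fun ω => ‖D ω‖ ^ 3) ℙ)
    (H : E → F) (hH : Differentiable ℝ H) (hH' : Continuous (fderiv ℝ H))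
    (A : ℝ) (hA : ∀ x, ‖fderiv ℝ H x‖ ≤ A * (1 + ‖x‖) ^ 2)
    (a : ℝ → ℝ) (ha : Continuous a) (ha1 : ∀ u, 0 < u → |a u| ≤ 1)
    (c : ℝ × Ω → F)
    (hc : AEStronglyMeasurable c ((volume.restrict (Set.Ioi (0 : ℝ))).prod ℙ)) (w : E)
    (hint : Integrable (fun z : ℝ × Ω =>
      a z.1 • H (Real.exp (-z.1) • w + Real.sqrt (1 - Real.exp (-2 * z.1)) • D z.2) - c z)
      ((volume.restrict (Set.Ioi (0 : ℝ))).prod ℙ)) :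
    Integrable (fun z : ℝ × Ω => (a z.1 * Real.exp (-z.1)) • fderiv ℝ H
      (Real.exp (-z.1) • w + Real.sqrt (1 - Real.exp (-2 * z.1)) • D z.2))
      ((volume.restrict (Set.Ioi (0 : ℝ))).prod ℙ) ∧
    HasFDerivAt (fun w : E => ∫ z : ℝ × Ω,
      (a z.1 • H (Real.exp (-z.1) • w + Real.sqrt (1 - Real.exp (-2 * z.1)) • D z.2) - c z)
      ∂((volume.restrict (Set.Ioi (0 : ℝ))).prod ℙ))
      (∫ z : ℝ × Ω, (a z.1 * Real.exp (-z.1)) • fderiv ℝ H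
      (Real.exp (-z.1) • w + Real.sqrt (1 - Real.exp (-2 * z.1)) • D z.2)
      ∂((volume.restrict (Set.Ioi (0 : ℝ))).prod ℙ)) w := by
  set μ := (volume.restrict (Set.Ioi (0 : ℝ))).prod (ℙ : Measure Ω) with hμ
  have hA0 : 0 ≤ A := by
    have := (norm_nonneg _).trans (hA 0)
    simpa using this
  have ham : AEStronglyMeasurable (fun z : ℝ × Ω => a z.1) μ :=
    (ha.aestronglyMeasurable (μ := volume.restrict (Set.Ioi (0 : ℝ)))).comp_fst
  have haem : AEStronglyMeasurable (fun z : ℝ × Ω => a z.1 * Real.exp (-z.1)) μ := by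
    have : Continuous fun u => a u * Real.exp (-u) := by fun_prop
    exact (this.aestronglyMeasurable (μ := volume.restrict (Set.Ioi (0 : ℝ)))).comp_fst
  have hm' : AEStronglyMeasurable (fun z : ℝ × Ω => (a z.1 * Real.exp (-z.1)) • fderiv ℝ H
      (Real.exp (-z.1) • w + Real.sqrt (1 - Real.exp (-2 * z.1)) • D z.2)) μ :=
    haem.smul (hH'.comp_aestronglyMeasurable (aux_meas D hDmeas w))
  have hb : ∀ᵐ z : ℝ × Ω ∂μ, ∀ x ∈ Metric.ball w 1,
      ‖(a z.1 * Real.exp (-z.1)) • fderiv ℝ H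
      (Real.exp (-z.1) • x + Real.sqrt (1 - Real.exp (-2 * z.1)) • D z.2)‖ ≤
      Real.exp (-z.1) * (A * ((‖w‖ + 2) + ‖D z.2‖) ^ 3) := by
    filter_upwards [aux_pos (Ω := Ω)] with z hz x hx
    have hx' : ‖x‖ ≤ ‖w‖ + 1 := by
      have h1 : ‖x - w‖ < 1 := by simpa [dist_eq_norm] using hx
      have h2 : ‖x‖ ≤ ‖w‖ + ‖x - w‖ := norm_le_norm_add_norm_sub' x w
      linarith
    have hd := norm_nonneg (D z.2)
    have hw := norm_nonneg w
    have hn := aux_xnorm x (D z.2) z.1 hz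
    rw [norm_smul, norm_mul, Real.norm_of_nonneg (Real.exp_pos _).le]
    have h1 : ‖fderiv ℝ H
      (Real.exp (-z.1) • x + Real.sqrt (1 - Real.exp (-2 * z.1)) • D z.2)‖ ≤
      A * ((‖w‖ + 2) + ‖D z.2‖) ^ 3 := by
      refine (hA _).trans ?_
      have h3 : (1 + ‖Real.exp (-z.1) • x + Real.sqrt (1 - Real.exp (-2 * z.1)) • D z.2‖) ^ 2
        ≤ ((‖w‖ + 2) + ‖D z.2‖) ^ 2 := by
        apply pow_le_pow_left₀ (by positivity); linarith
      have h4 : ((‖w‖ + 2) + ‖D z.2‖) ^ 2 ≤ ((‖w‖ + 2) + ‖D z.2‖) ^ 3 :=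
        pow_le_pow_right₀ (by linarith) (by norm_num)
      exact mul_le_mul_of_nonneg_left (h3.trans h4) hA0
    have h2 : ‖a z.1‖ ≤ 1 := ha1 _ hz
    have h5 : ‖a z.1‖ * Real.exp (-z.1) ≤ Real.exp (-z.1) := by
      have := mul_le_mul_of_nonneg_right h2 (Real.exp_pos (-z.1)).le
      linarith
    exact mul_le_mul h5 h1 (norm_nonneg _) (Real.exp_pos _).le
  have hbi := aux_bound D hDmeas hD3 (‖w‖ + 2) A (by positivity)
  refine ⟨hbi.mono' hm' ?_, ?_⟩
  · filter_upwards [hb] with z hz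
    exact hz w (Metric.mem_ball_self one_pos)
  · refine hasFDerivAt_integral_of_dominated_of_fderiv_le
      (F := fun x (z : ℝ × Ω) => a z.1 • H
        (Real.exp (-z.1) • x + Real.sqrt (1 - Real.exp (-2 * z.1)) • D z.2) - c z)
      (F' := fun x (z : ℝ × Ω) => (a z.1 * Real.exp (-z.1)) • fderiv ℝ H
      (Real.exp (-z.1) • x + Real.sqrt (1 - Real.exp (-2 * z.1)) • D z.2))
      (bound := fun z : ℝ × Ω => Real.exp (-z.1) * (A * ((‖w‖ + 2) + ‖D z.2‖) ^ 3))
      (Metric.ball_mem_nhds w one_pos) ?_ hint hm' hb hbi ?_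
    · refine Filter.Eventually.of_forall fun x => ?_
      exact (ham.smul (hH.continuous.comp_aestronglyMeasurable (aux_meas D hDmeas x))).sub hc
    · refine Filter.Eventually.of_forall fun z x _ => ?_
      have h1 : HasFDerivAt (fun x : E =>
          Real.exp (-z.1) • x + Real.sqrt (1 - Real.exp (-2 * z.1)) • D z.2)
          (Real.exp (-z.1) • ContinuousLinearMap.id ℝ E) x :=
        ((hasFDerivAt_id x).const_smul (Real.exp (-z.1))).add_const _
      have h2 := ((((hH _).hasFDerivAt).comp x h1).const_smul (a z.1)).sub_const (c z)
      refine h2.congr_fderiv ?_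
      ext v
      simp [mul_smul]

/-- Let `g ∈ M` with `E[g(D)] = 0`. Then for every `w` the integral
`φ(g)(w) = −∫₀^∞ (T_u g)(w) du` converges absolutely, `φ(g)` is twice Fréchet differentiable,
and for `k = 1, 2`, `D^k φ(g)(w) = −∫₀^∞ e^{−ku} E[D^k g(e^{−u} w + σ(u) D)] du`, the integrals
being Bochner integrals in the spaces of continuous (bi)linear forms. -/
theorem stmt_3 {E : Type*} [NormedAddCommGroup E] [NormedSpace ℝ E] [CompleteSpace E]
    [TopologicalSpace.SeparableSpace E]
    {Ω : Type*} [MeasureSpace Ω] [IsProbabilityMeasure (ℙ : Measure Ω)]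
    (D : Ω → E) (hDmeas : AEStronglyMeasurable D ℙ)
    (hD3 : Integrable (fun ω => ‖D ω‖ ^ 3) ℙ)
    (hDmean : (∫ ω, D ω ∂ℙ) = 0)
    (g : E → ℝ)
    (hg₁ : Differentiable ℝ g)
    (hg₂ : Differentiable ℝ (fderiv ℝ g))
    (C₀ : ℝ) (hC₀ : ∀ w : E, |g w| ≤ C₀ * (1 + ‖w‖ ^ 3))
    (kg : ℝ)
    (hkg : ∀ w h : E,
      ‖fderiv ℝ (fderiv ℝ g) (w + h) - fderiv ℝ (fderiv ℝ g) w‖ ≤ kg * ‖h‖)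
    (hmean : (∫ ω, g (D ω) ∂ℙ) = 0) :
    -- absolute convergence of the defining integral
    (∀ w : E, IntegrableOn
      (fun u : ℝ => ∫ ω, g (Real.exp (-u) • w + Real.sqrt (1 - Real.exp (-2 * u)) • D ω) ∂ℙ)
      (Set.Ioi 0)) ∧
    -- `φ(g)` is twice Fréchet differentiable
    Differentiable ℝ
      (fun w : E => -∫ u in Set.Ioi (0 : ℝ),
        ∫ ω, g (Real.exp (-u) • w + Real.sqrt (1 - Real.exp (-2 * u)) • D ω) ∂ℙ) ∧
    Differentiable ℝ
      (fderiv ℝ (fun w : E => -∫ u in Set.Ioi (0 : ℝ),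
        ∫ ω, g (Real.exp (-u) • w + Real.sqrt (1 - Real.exp (-2 * u)) • D ω) ∂ℙ)) ∧
    -- first derivative formula
    (∀ w : E,
      fderiv ℝ (fun w : E => -∫ u in Set.Ioi (0 : ℝ),
          ∫ ω, g (Real.exp (-u) • w + Real.sqrt (1 - Real.exp (-2 * u)) • D ω) ∂ℙ) w
        = -∫ u in Set.Ioi (0 : ℝ), Real.exp (-u) •
            (∫ ω, fderiv ℝ g (Real.exp (-u) • w + Real.sqrt (1 - Real.exp (-2 * u)) • D ω) ∂ℙ)) ∧
    -- second derivative formula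
    (∀ w : E,
      fderiv ℝ (fderiv ℝ (fun w : E => -∫ u in Set.Ioi (0 : ℝ),
          ∫ ω, g (Real.exp (-u) • w + Real.sqrt (1 - Real.exp (-2 * u)) • D ω) ∂ℙ)) w
        = -∫ u in Set.Ioi (0 : ℝ), Real.exp (-2 * u) •
            (∫ ω, fderiv ℝ (fderiv ℝ g)
              (Real.exp (-u) • w + Real.sqrt (1 - Real.exp (-2 * u)) • D ω) ∂ℙ)) := by
  set μ := (volume.restrict (Set.Ioi (0 : ℝ))).prod (ℙ : Measure Ω) with hμ
  have hkg' : ∀ w, ‖fderiv ℝ (fderiv ℝ g) w‖ ≤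
      (‖fderiv ℝ (fderiv ℝ g) 0‖ + |kg|) * (1 + ‖w‖) := by
    intro w
    have h1 := hkg 0 w
    rw [zero_add] at h1
    have h2 : ‖fderiv ℝ (fderiv ℝ g) w‖ ≤ ‖fderiv ℝ (fderiv ℝ g) 0‖ +
      ‖fderiv ℝ (fderiv ℝ g) w - fderiv ℝ (fderiv ℝ g) 0‖ := by
      have h := norm_add_le (fderiv ℝ (fderiv ℝ g) 0)
        (fderiv ℝ (fderiv ℝ g) w - fderiv ℝ (fderiv ℝ g) 0)
      rwa [add_sub_cancel] at h
    have h3 := mul_le_mul_of_nonneg_right (le_abs_self kg) (norm_nonneg w)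
    have h4 := mul_nonneg (norm_nonneg (fderiv ℝ (fderiv ℝ g) 0)) (norm_nonneg w)
    have h5 := abs_nonneg kg
    linarith
  obtain ⟨A₂, hA₂0, hA₂⟩ : ∃ A₂ : ℝ, 0 ≤ A₂ ∧
      ∀ w, ‖fderiv ℝ (fderiv ℝ g) w‖ ≤ A₂ * (1 + ‖w‖) := ⟨_, by positivity, hkg'⟩
  obtain ⟨A₁, hA₁0, hA₁⟩ : ∃ A₁ : ℝ, 0 ≤ A₁ ∧
      ∀ w, ‖fderiv ℝ g w‖ ≤ A₁ * (1 + ‖w‖) ^ 2 := by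
    refine ⟨‖fderiv ℝ g 0‖ + A₂, by positivity, fun w => ?_⟩
    have h1 : ‖fderiv ℝ g w - fderiv ℝ g 0‖ ≤ A₂ * (1 + ‖w‖) * ‖w - 0‖ := by
      refine (convex_closedBall (0 : E) ‖w‖).norm_image_sub_le_of_norm_fderiv_le (𝕜 := ℝ)
        (fun x _ => hg₂ x) (fun x hx => ?_) (by simp) (by simp)
      have hx' : ‖x‖ ≤ ‖w‖ := by simpa using hx
      exact (hA₂ x).trans (mul_le_mul_of_nonneg_left (by linarith) hA₂0)
    have h2 : ‖fderiv ℝ g w‖ ≤ ‖fderiv ℝ g 0‖ + ‖fderiv ℝ g w - fderiv ℝ g 0‖ :=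
      norm_le_norm_add_norm_sub' _ _
    rw [sub_zero] at h1
    have hw := norm_nonneg w
    have h3 : ‖fderiv ℝ g 0‖ * 1 ≤ ‖fderiv ℝ g 0‖ * (1 + ‖w‖) ^ 2 :=
      mul_le_mul_of_nonneg_left (by nlinarith) (norm_nonneg _)
    have h4 : A₂ * ((1 + ‖w‖) * ‖w‖) ≤ A₂ * (1 + ‖w‖) ^ 2 :=
      mul_le_mul_of_nonneg_left (by nlinarith) hA₂0
    linarith
  have hG2c : Continuous (fderiv ℝ (fderiv ℝ g)) := by
    have : LipschitzWith (Real.toNNReal |kg|) (fderiv ℝ (fderiv ℝ g)) := by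
      refine LipschitzWith.of_dist_le_mul fun x y => ?_
      rw [dist_eq_norm, dist_eq_norm, Real.coe_toNNReal _ (abs_nonneg _)]
      have h1 := hkg y (x - y)
      rw [add_sub_cancel] at h1
      exact h1.trans (mul_le_mul_of_nonneg_right (le_abs_self kg) (norm_nonneg _))
    exact this.continuous
  -- pointwise bound on the centred integrand
  have hpt : ∀ (w : E) (u : ℝ) (d : E), 0 < u →
      ‖g (Real.exp (-u) • w + Real.sqrt (1 - Real.exp (-2 * u)) • d) - g d‖ ≤
        Real.exp (-u) * (A₁ * ((‖w‖ + 1) + ‖d‖) ^ 3) := by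
    intro w u d hu
    have hw := norm_nonneg w
    have hd := norm_nonneg d
    have h1 : ‖g (Real.exp (-u) • w + Real.sqrt (1 - Real.exp (-2 * u)) • d) - g d‖ ≤
        A₁ * ((‖w‖ + 1) + ‖d‖) ^ 2 *
        ‖Real.exp (-u) • w + Real.sqrt (1 - Real.exp (-2 * u)) • d - d‖ := by
      refine (convex_closedBall (0 : E) (‖w‖ + ‖d‖)).norm_image_sub_le_of_norm_fderiv_le (𝕜 := ℝ)
        (fun x _ => hg₁ x) (fun x hx => ?_) ?_ ?_
      · have hx' : ‖x‖ ≤ ‖w‖ + ‖d‖ := by simpa using hx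
        refine (hA₁ x).trans (mul_le_mul_of_nonneg_left ?_ hA₁0)
        apply pow_le_pow_left₀ (by positivity); linarith
      · rw [mem_closedBall_zero_iff]; linarith
      · rw [mem_closedBall_zero_iff]; exact aux_xnorm w d u hu
    have h2 := aux_xdiff w d u hu
    have h3 : Real.exp (-u) * (‖w‖ + ‖d‖) ≤ Real.exp (-u) * ((‖w‖ + 1) + ‖d‖) :=
      mul_le_mul_of_nonneg_left (by linarith) (Real.exp_pos _).le
    calc _ ≤ _ := h1
      _ ≤ A₁ * ((‖w‖ + 1) + ‖d‖) ^ 2 * (Real.exp (-u) * ((‖w‖ + 1) + ‖d‖)) :=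
        mul_le_mul_of_nonneg_left (h2.trans h3) (by positivity)
      _ = _ := by ring
  have hgD : Integrable (fun ω => g (D ω)) ℙ := by
    refine Integrable.mono' (g := fun ω => C₀ * (1 + ‖D ω‖ ^ 3))
      (((integrable_const _).add hD3).const_mul C₀)
      (hg₁.continuous.comp_aestronglyMeasurable hDmeas) ?_
    exact Filter.Eventually.of_forall fun ω => hC₀ _
  have hdiffω : ∀ (w : E) (u : ℝ), 0 < u → Integrable (fun ω =>
      g (Real.exp (-u) • w + Real.sqrt (1 - Real.exp (-2 * u)) • D ω) - g (D ω)) ℙ := by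
    intro w u hu
    refine Integrable.mono'
      (((aux_cube D hDmeas hD3 (‖w‖ + 1) (by positivity)).const_mul A₁).const_mul
        (Real.exp (-u))) ?_ (Filter.Eventually.of_forall fun ω => hpt w u (D ω) hu)
    have hc : Continuous fun d : E =>
      g (Real.exp (-u) • w + Real.sqrt (1 - Real.exp (-2 * u)) • d) - g d := by
      have := hg₁.continuous
      fun_prop
    exact hc.comp_aestronglyMeasurable hDmeas
  have hin : ∀ (w : E) (u : ℝ), 0 < u →
      (∫ ω, (g (Real.exp (-u) • w + Real.sqrt (1 - Real.exp (-2 * u)) • D ω) - g (D ω)) ∂ℙ) =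
      ∫ ω, g (Real.exp (-u) • w + Real.sqrt (1 - Real.exp (-2 * u)) • D ω) ∂ℙ := by
    intro w u hu
    have h1 : Integrable (fun ω =>
        g (Real.exp (-u) • w + Real.sqrt (1 - Real.exp (-2 * u)) • D ω)) ℙ := by
      refine ((hdiffω w u hu).add hgD).congr (Filter.Eventually.of_forall fun ω => ?_)
      simp
    rw [integral_sub h1 hgD, hmean, sub_zero]
  have hcm : AEStronglyMeasurable (fun z : ℝ × Ω => g (D z.2)) μ :=
    (hg₁.continuous.comp_aestronglyMeasurable hDmeas).comp_snd
  have hI0 : ∀ w : E, Integrable (fun z : ℝ × Ω => (1 : ℝ) • 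
      g (Real.exp (-z.1) • w + Real.sqrt (1 - Real.exp (-2 * z.1)) • D z.2) - g (D z.2)) μ := by
    intro w
    simp only [one_smul]
    refine (aux_bound D hDmeas hD3 (‖w‖ + 1) A₁ (by positivity)).mono'
      ((hg₁.continuous.comp_aestronglyMeasurable (aux_meas D hDmeas w)).sub hcm) ?_
    filter_upwards [aux_pos (Ω := Ω)] with z hz
    exact hpt w z.1 (D z.2) hz
  have hd1 := fun w => aux_deriv D hDmeas hD3 g hg₁ hg₂.continuous A₁ hA₁ (fun _ => 1)
    continuous_const (by simp) (fun z : ℝ × Ω => g (D z.2)) hcm w (hI0 w)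
  have hd2 := fun w => aux_deriv D hDmeas hD3 (fderiv ℝ g) hg₂ hG2c A₂
    (fun x => (hA₂ x).trans (mul_le_mul_of_nonneg_left
      (by nlinarith [norm_nonneg x]) hA₂0)) (fun u => 1 * Real.exp (-u))
    (by fun_prop) (fun u hu => by
      rw [one_mul, abs_of_pos (Real.exp_pos _), Real.exp_le_one_iff]; linarith)
    (fun _ => 0) aestronglyMeasurable_const w (by simpa using (hd1 w).1)
  simp only [one_mul, one_smul, sub_zero] at hd1 hd2 hI0
  have hφ : (fun w : E => -∫ u in Set.Ioi (0 : ℝ),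
        ∫ ω, g (Real.exp (-u) • w + Real.sqrt (1 - Real.exp (-2 * u)) • D ω) ∂ℙ) =
      fun w : E => -∫ z : ℝ × Ω, 
        (g (Real.exp (-z.1) • w + Real.sqrt (1 - Real.exp (-2 * z.1)) • D z.2) - g (D z.2)) ∂μ := by
    funext w
    rw [hμ, integral_prod _ (hI0 w)]
    congr 1
    exact setIntegral_congr_fun measurableSet_Ioi fun u hu => (hin w u hu).symm
  have hf1 : fderiv ℝ (fun w : E => -∫ u in Set.Ioi (0 : ℝ),
        ∫ ω, g (Real.exp (-u) • w + Real.sqrt (1 - Real.exp (-2 * u)) • D ω) ∂ℙ) =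
      fun w : E => -∫ z : ℝ × Ω, Real.exp (-z.1) • fderiv ℝ g
        (Real.exp (-z.1) • w + Real.sqrt (1 - Real.exp (-2 * z.1)) • D z.2) ∂μ := by
    rw [hφ]
    funext w
    exact (hd1 w).2.neg.fderiv
  refine ⟨fun w => ?_, ?_, ?_, fun w => ?_, fun w => ?_⟩
  · have h1 := (hI0 w).integral_prod_left
    refine IntegrableOn.congr_fun (f := fun u => ∫ ω, (g (Real.exp (-u) • w +
      Real.sqrt (1 - Real.exp (-2 * u)) • D ω) - g (D ω)) ∂ℙ) h1 (fun u hu => hin w u hu)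
      measurableSet_Ioi
  · rw [hφ]
    exact fun w => (hd1 w).2.neg.differentiableAt
  · rw [hf1]
    exact fun w => (hd2 w).2.neg.differentiableAt
  · rw [hf1]
    simp only
    rw [hμ, integral_prod _ (hd1 w).1]
    simp only [integral_smul]
  · rw [hf1]
    refine (hd2 w).2.neg.fderiv.trans ?_
    rw [integral_prod _ (hd2 w).1]
    simp only [integral_smul, ← Real.exp_add]
    congr 2
    funext u
    congr 2
    ring
end

section
/- Let g ∈ M satisfy E[g(D)] = 0 and let φ(g)(w) = −∫₀^∞ (T_u g)(w) du. Then for all w, h ∈ E: (A) ‖Dφ(g)(w)‖ ≤ ‖g‖_M (1 + (2/3)‖w‖² + (4/3)E[‖D‖²]); (B) ‖D²φ(g)(w)‖ ≤ ‖g‖_M (1/2 + ‖w‖/3 + E[‖D‖]/3); (C) ‖D²φ(g)(w+h) − D²φ(g)(w)‖ ≤ (‖h‖/3) · sup_{w',h'≠0} ‖D²g(w'+h') − D²g(w')‖/‖h'‖. -/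
open MeasureTheory ProbabilityTheory

/-- The `M`-norm of `g`:
`‖g‖_M = sup_w |g w|/(1+‖w‖³) + sup_w ‖Dg w‖/(1+‖w‖²) + sup_w ‖D²g w‖/(1+‖w‖)
        + sup_{w,h} ‖D²g(w+h) − D²g(w)‖/‖h‖`. -/
noncomputable def Mnorm {E : Type*} [NormedAddCommGroup E] [NormedSpace ℝ E]
    (g : E → ℝ) : ℝ :=
  (⨆ w : E, |g w| / (1 + ‖w‖ ^ 3)) +
  (⨆ w : E, ‖fderiv ℝ g w‖ / (1 + ‖w‖ ^ 2)) +
  (⨆ w : E, ‖fderiv ℝ (fderiv ℝ g) w‖ / (1 + ‖w‖)) +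
  (⨆ w : E, ⨆ h : E,
    ‖fderiv ℝ (fderiv ℝ g) (w + h) - fderiv ℝ (fderiv ℝ g) w‖ / ‖h‖)

lemma aux_nsle {V : Type*} [NormedAddCommGroup V] [NormedSpace ℝ V] (c M : ℝ) (v : V)
    (h : ‖v‖ ≤ M) : ‖c • v‖ ≤ |c| * M := by
  rw [norm_smul, Real.norm_eq_abs]; gcongr

lemma aux_nsle2 {V : Type*} [NormedAddCommGroup V] [NormedSpace ℝ V] (c M : ℝ) (v v' : V)
    (h : ‖v - v'‖ ≤ M) : ‖c • v - c • v'‖ ≤ |c| * M := by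
  rw [← smul_sub]; exact aux_nsle _ _ _ h

lemma aux_exp (n : ℕ) (hn : 0 < n) :
    Integrable (fun u : ℝ => Real.exp (-u) ^ n) (volume.restrict (Set.Ioi 0)) ∧
    ∫ u in Set.Ioi (0 : ℝ), Real.exp (-u) ^ n = 1 / n := by
  have hn' : -(n : ℝ) < 0 := by simpa using hn
  have e : (fun u : ℝ => Real.exp (-u) ^ n) = fun u => Real.exp (-(n : ℝ) * u) := by
    funext u
    rw [← Real.exp_nat_mul]; congr 1; ring
  rw [e]
  refine ⟨integrableOn_exp_mul_Ioi hn' 0, ?_⟩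
  rw [integral_exp_mul_Ioi hn' 0]
  simp

lemma aux_b_sq (u : ℝ) (hu : 0 < u) :
    Real.sqrt (1 - Real.exp (-2 * u)) ^ 2 = 1 - Real.exp (-u) ^ 2 := by
  have e : Real.exp (-2 * u) = Real.exp (-u) ^ 2 := by
    rw [← Real.exp_nat_mul]; congr 1; push_cast; ring
  rw [e, Real.sq_sqrt]
  have h1 : Real.exp (-u) ≤ 1 := Real.exp_le_one_iff.2 (by linarith)
  have h0 := Real.exp_pos (-u)
  nlinarith

lemma aux_ab2 :
    Integrable (fun u : ℝ => Real.exp (-u) * Real.sqrt (1 - Real.exp (-2 * u)) ^ 2)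
      (volume.restrict (Set.Ioi 0)) ∧
    ∫ u in Set.Ioi (0 : ℝ), Real.exp (-u) * Real.sqrt (1 - Real.exp (-2 * u)) ^ 2 = 2 / 3 := by
  have h1 := aux_exp 1 (by norm_num)
  have h3 := aux_exp 3 (by norm_num)
  have e : (fun u : ℝ => Real.exp (-u) ^ 1 - Real.exp (-u) ^ 3)
      =ᵐ[volume.restrict (Set.Ioi 0)]
      (fun u : ℝ => Real.exp (-u) * Real.sqrt (1 - Real.exp (-2 * u)) ^ 2) := by
    filter_upwards [ae_restrict_mem measurableSet_Ioi] with u hu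
    rw [aux_b_sq u hu]; ring
  refine ⟨(h1.1.sub h3.1).congr e, ?_⟩
  rw [← integral_congr_ae e, integral_sub h1.1 h3.1, h1.2, h3.2]
  norm_num

lemma aux_a2b :
    Integrable (fun u : ℝ => Real.exp (-u) ^ 2 * Real.sqrt (1 - Real.exp (-2 * u)))
      (volume.restrict (Set.Ioi 0)) ∧
    ∫ u in Set.Ioi (0 : ℝ), Real.exp (-u) ^ 2 * Real.sqrt (1 - Real.exp (-2 * u)) = 1 / 3 := by
  set G : ℝ → ℝ := fun u => 1 / 3 * ((1 - Real.exp (-2 * u)) * Real.sqrt (1 - Real.exp (-2 * u)))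
    with hG
  have hc : ContinuousWithinAt G (Set.Ici 0) 0 := by
    apply Continuous.continuousWithinAt
    fun_prop
  have hd : ∀ x ∈ Set.Ioi (0 : ℝ), HasDerivAt G
      (Real.exp (-x) ^ 2 * Real.sqrt (1 - Real.exp (-2 * x))) x := by
    intro x hx
    have e : Real.exp (-2 * x) = Real.exp (-x) ^ 2 := by
      rw [← Real.exp_nat_mul]; congr 1; push_cast; ring
    have hpos : 0 < 1 - Real.exp (-2 * x) := by
      have : Real.exp (-2 * x) < 1 := Real.exp_lt_one_iff.2 (by
        have : (0 : ℝ) < x := hx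
        linarith)
      linarith
    have h1 : HasDerivAt (fun u : ℝ => 1 - Real.exp (-2 * u)) (2 * Real.exp (-2 * x)) x := by
      have := (((hasDerivAt_id x).const_mul (-2)).exp).const_sub 1
      refine this.congr_deriv ?_
      simp; ring
    have h2 := h1.sqrt hpos.ne'
    refine ((h1.mul h2).const_mul (1 / 3)).congr_deriv ?_
    rw [← e]
    have hs : Real.sqrt (1 - Real.exp (-2 * x)) ≠ 0 := (Real.sqrt_pos.2 hpos).ne'
    have hss := Real.sq_sqrt hpos.le
    set S := Real.sqrt (1 - Real.exp (-2 * x)) with hS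
    rw [← hss]
    field_simp
    ring
  have hn : ∀ x ∈ Set.Ioi (0 : ℝ), 0 ≤ Real.exp (-x) ^ 2 * Real.sqrt (1 - Real.exp (-2 * x)) := by
    intro x _; positivity
  have ht : Filter.Tendsto G Filter.atTop (nhds (1 / 3)) := by
    have h0 : Filter.Tendsto (fun u : ℝ => Real.exp (-2 * u)) Filter.atTop (nhds 0) := by
      apply Real.tendsto_exp_atBot.comp
      exact Filter.tendsto_id.const_mul_atTop_of_neg (by norm_num)
    have h1 : Filter.Tendsto (fun u : ℝ => 1 - Real.exp (-2 * u)) Filter.atTop (nhds (1 - 0)) :=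
      h0.const_sub 1
    have h2 := (h1.mul (h1.sqrt)).const_mul (1 / 3)
    simpa [hG] using h2
  refine ⟨integrableOn_Ioi_deriv_of_nonneg hc hd hn ht, ?_⟩
  rw [integral_Ioi_of_hasDerivAt_of_nonneg hc hd hn ht]
  simp [hG]

lemma aux_int3 {α β : Type*} [MeasurableSpace α] [MeasurableSpace β] (μ : Measure α)
    (ν : Measure β) [SFinite μ] [IsProbabilityMeasure ν] (f k : α → ℝ) (h : β → ℝ)
    (hf : Integrable f μ) (hk : Integrable k μ) (hh : Integrable h ν) :
    Integrable (fun p : α × β => f p.1 + k p.1 * h p.2) (μ.prod ν) ∧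
    ∫ p, (f p.1 + k p.1 * h p.2) ∂(μ.prod ν) = (∫ x, f x ∂μ) + (∫ x, k x ∂μ) * ∫ y, h y ∂ν := by
  have h1 : Integrable (fun p : α × β => f p.1) (μ.prod ν) := hf.comp_fst ν
  have h2 := hk.mul_prod hh
  refine ⟨h1.add h2, ?_⟩
  rw [integral_add h1 h2, integral_prod_mul]
  congr 1
  have := integral_prod_mul (μ := μ) (ν := ν) f (fun _ => (1 : ℝ))
  simpa using this

lemma aux_step {α : Type*} [MeasurableSpace α] (ν : Measure α)
    {E F : Type*} [NormedAddCommGroup E] [NormedSpace ℝ E]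
    [NormedAddCommGroup F] [NormedSpace ℝ F]
    (c a : α → ℝ) (X : α → E) (R : α → F) (G : E → F)
    (hG : Differentiable ℝ G) (hG' : Continuous (fderiv ℝ G))
    (C : ℝ) (hb : ∀ w, ‖fderiv ℝ G w‖ ≤ C * (1 + ‖w‖ ^ 2))
    (hc : AEStronglyMeasurable c ν) (ha : AEStronglyMeasurable a ν)
    (hX : AEStronglyMeasurable X ν)
    (ha1 : ∀ᵐ p ∂ν, |a p| ≤ 1)
    (hint : ∀ w, Integrable (fun p => c p • G (a p • w + X p) - R p) ν)
    (hbd : Integrable (fun p => |c p * a p|) ν)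
    (hbd2 : Integrable (fun p => |c p * a p| * ‖X p‖ ^ 2) ν) (w : E) :
    Integrable (fun p => (c p * a p) • fderiv ℝ G (a p • w + X p)) ν ∧
    HasFDerivAt (fun w => ∫ p, (c p • G (a p • w + X p) - R p) ∂ν)
      (∫ p, (c p * a p) • fderiv ℝ G (a p • w + X p) ∂ν) w := by
  have hC : 0 ≤ C := by
    have := (norm_nonneg _).trans (hb 0)
    simpa using this
  have hm : ∀ w, AEStronglyMeasurable
      (fun p => (c p * a p) • fderiv ℝ G (a p • w + X p)) ν := fun w =>
    (hc.mul ha).smul (hG'.comp_aestronglyMeasurable ((ha.smul_const w).add hX))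
  have hB : Integrable (fun p => C * (1 + 2 * (‖w‖ + 1) ^ 2) * |c p * a p|
      + 2 * C * (|c p * a p| * ‖X p‖ ^ 2)) ν :=
    (hbd.const_mul _).add (hbd2.const_mul _)
  have hle : ∀ᵐ p ∂ν, ∀ x ∈ Metric.ball w 1,
      ‖(c p * a p) • fderiv ℝ G (a p • x + X p)‖ ≤ C * (1 + 2 * (‖w‖ + 1) ^ 2) * |c p * a p|
      + 2 * C * (|c p * a p| * ‖X p‖ ^ 2) := by
    filter_upwards [ha1] with p hp x hx
    rw [norm_smul, Real.norm_eq_abs]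
    have hx' : ‖x‖ ≤ ‖w‖ + 1 := by
      have : ‖x - w‖ < 1 := by simpa [dist_eq_norm] using hx
      have h2 := norm_add_le w (x - w)
      rw [add_sub_cancel] at h2
      linarith
    have h1 : ‖a p • x + X p‖ ≤ (‖w‖ + 1) + ‖X p‖ := by
      refine (norm_add_le _ _).trans ?_
      gcongr
      rw [norm_smul, Real.norm_eq_abs]
      calc |a p| * ‖x‖ ≤ 1 * ‖x‖ := by gcongr
        _ ≤ _ := by linarith
    have h2 : ‖a p • x + X p‖ ^ 2 ≤ 2 * (‖w‖ + 1) ^ 2 + 2 * ‖X p‖ ^ 2 := by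
      calc ‖a p • x + X p‖ ^ 2 ≤ ((‖w‖ + 1) + ‖X p‖) ^ 2 := by gcongr
        _ ≤ _ := by nlinarith [sq_nonneg (‖w‖ + 1 - ‖X p‖)]
    calc |c p * a p| * ‖fderiv ℝ G (a p • x + X p)‖
        ≤ |c p * a p| * (C * (1 + (2 * (‖w‖ + 1) ^ 2 + 2 * ‖X p‖ ^ 2))) := by
          gcongr
          exact (hb _).trans (by gcongr)
      _ = _ := by ring
  refine ⟨hB.mono' (hm w) ?_, ?_⟩
  · filter_upwards [hle] with p hp using hp w (Metric.mem_ball_self one_pos)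
  · refine hasFDerivAt_integral_of_dominated_of_fderiv_le
      (F := fun w p => c p • G (a p • w + X p) - R p)
      (F' := fun w p => (c p * a p) • fderiv ℝ G (a p • w + X p))
      (Metric.ball_mem_nhds w one_pos) ?_ (hint w) (hm w) hle hB ?_
    · exact Filter.Eventually.of_forall fun x => (hint x).aestronglyMeasurable
    · refine Filter.Eventually.of_forall fun p x _ => ?_
      have h1 : HasFDerivAt (fun x : E => a p • x + X p) (a p • ContinuousLinearMap.id ℝ E) x :=
        ((hasFDerivAt_id x).const_smul (a p)).add_const _
      have h2 := (((hG _).hasFDerivAt.comp x h1).const_smul (c p)).sub_const (R p)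
      refine h2.congr_fderiv ?_
      ext v
      simp [mul_smul]

lemma aux_sups {E : Type*} [NormedAddCommGroup E] [NormedSpace ℝ E]
    (g : E → ℝ) (hg₂ : Differentiable ℝ (fderiv ℝ g)) (kg : ℝ)
    (hkg : ∀ w h : E,
      ‖fderiv ℝ (fderiv ℝ g) (w + h) - fderiv ℝ (fderiv ℝ g) w‖ ≤ kg * ‖h‖) :
    (∀ w, ‖fderiv ℝ g w‖ ≤ Mnorm g * (1 + ‖w‖ ^ 2)) ∧
    (∀ w, ‖fderiv ℝ (fderiv ℝ g) w‖ ≤ Mnorm g * (1 + ‖w‖)) ∧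
    (∀ w h : E, ‖fderiv ℝ (fderiv ℝ g) (w + h) - fderiv ℝ (fderiv ℝ g) w‖ ≤
      (⨆ w' : E, ⨆ h' : E,
            ‖fderiv ℝ (fderiv ℝ g) (w' + h') - fderiv ℝ (fderiv ℝ g) w'‖ / ‖h'‖) * ‖h‖) := by
  set K := max kg 0 with hK
  have hK0 : 0 ≤ K := le_max_right _ _
  have hkK : ∀ w h : E,
      ‖fderiv ℝ (fderiv ℝ g) (w + h) - fderiv ℝ (fderiv ℝ g) w‖ ≤ K * ‖h‖ := fun w h =>
    (hkg w h).trans (by gcongr; exact le_max_left _ _)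
  have hq : ∀ w h : E,
      ‖fderiv ℝ (fderiv ℝ g) (w + h) - fderiv ℝ (fderiv ℝ g) w‖ / ‖h‖ ≤ K := fun w h =>
    div_le_of_le_mul₀ (norm_nonneg _) hK0 (hkK w h)
  set A := ‖fderiv ℝ (fderiv ℝ g) 0‖ with hA
  have hA0 : 0 ≤ A := norm_nonneg (fderiv ℝ (fderiv ℝ g) 0)
  have h2 : ∀ w, ‖fderiv ℝ (fderiv ℝ g) w‖ ≤ A + K * ‖w‖ := by
    intro w
    have := hkK 0 w
    rw [zero_add] at this
    have h3 := norm_le_norm_add_norm_sub' (fderiv ℝ (fderiv ℝ g) w) (fderiv ℝ (fderiv ℝ g) 0)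
    linarith
  set B := ‖fderiv ℝ g 0‖ with hB
  have hB0 : 0 ≤ B := norm_nonneg _
  have h1 : ∀ w, ‖fderiv ℝ g w‖ ≤ B + (A + K * ‖w‖) * ‖w‖ := by
    intro w
    have := Convex.norm_image_sub_le_of_norm_fderiv_le (𝕜 := ℝ) (f := fderiv ℝ g)
      (s := Metric.closedBall 0 ‖w‖) (x := 0) (y := w) (C := A + K * ‖w‖)
      (fun x _ => hg₂ x) (fun x hx => (h2 x).trans (by
        have : ‖x‖ ≤ ‖w‖ := by simpa using hx
        gcongr)) (convex_closedBall _ _) (by simp) (by simp)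
    rw [sub_zero] at this
    have h3 := norm_le_norm_add_norm_sub' (fderiv ℝ g w) (fderiv ℝ g 0)
    linarith
  have s0 : 0 ≤ ⨆ w : E, |g w| / (1 + ‖w‖ ^ 3) := Real.iSup_nonneg fun w => by positivity
  have s1 : 0 ≤ ⨆ w : E, ‖fderiv ℝ g w‖ / (1 + ‖w‖ ^ 2) :=
    Real.iSup_nonneg fun w => by positivity
  have s2 : 0 ≤ ⨆ w : E, ‖fderiv ℝ (fderiv ℝ g) w‖ / (1 + ‖w‖) :=
    Real.iSup_nonneg fun w => by positivity
  have s3 : 0 ≤ ⨆ w : E, ⨆ h : E,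
    ‖fderiv ℝ (fderiv ℝ g) (w + h) - fderiv ℝ (fderiv ℝ g) w‖ / ‖h‖ :=
    Real.iSup_nonneg fun w => Real.iSup_nonneg fun h => by positivity
  refine ⟨fun w => ?_, fun w => ?_, fun w h => ?_⟩
  · rw [← div_le_iff₀ (by positivity)]
    have : ‖fderiv ℝ g w‖ / (1 + ‖w‖ ^ 2) ≤ ⨆ w : E, ‖fderiv ℝ g w‖ / (1 + ‖w‖ ^ 2) := by
      refine le_ciSup (f := fun w : E => ‖fderiv ℝ g w‖ / (1 + ‖w‖ ^ 2))
        ⟨A + B + K, ?_⟩ w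
      rintro _ ⟨x, rfl⟩
      refine div_le_of_le_mul₀ (by positivity) (by positivity) ((h1 x).trans ?_)
      have hx := norm_nonneg x
      have e1 : ‖x‖ ≤ 1 + ‖x‖ ^ 2 := by nlinarith [sq_nonneg (‖x‖ - 1)]
      have e2 := mul_le_mul_of_nonneg_left e1 hA0
      have e3 := mul_nonneg hB0 (sq_nonneg ‖x‖)
      nlinarith
    unfold Mnorm
    linarith
  · rw [← div_le_iff₀ (by positivity)]
    have : ‖fderiv ℝ (fderiv ℝ g) w‖ / (1 + ‖w‖) ≤
        ⨆ w : E, ‖fderiv ℝ (fderiv ℝ g) w‖ / (1 + ‖w‖) := by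
      refine le_ciSup (f := fun w : E => ‖fderiv ℝ (fderiv ℝ g) w‖ / (1 + ‖w‖))
        ⟨A + K, ?_⟩ w
      rintro _ ⟨x, rfl⟩
      refine div_le_of_le_mul₀ (by positivity) (by positivity) ((h2 x).trans ?_)
      have hx := norm_nonneg x
      have e3 := mul_nonneg hA0 hx
      nlinarith
    unfold Mnorm
    linarith
  · rcases eq_or_ne h 0 with rfl | hh
    · simpa using hkK w 0
    · rw [← div_le_iff₀ (norm_pos_iff.2 hh)]
      have i1 := le_ciSup (f := fun h : E =>
        ‖fderiv ℝ (fderiv ℝ g) (w + h) - fderiv ℝ (fderiv ℝ g) w‖ / ‖h‖)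
        ⟨K, by rintro _ ⟨x, rfl⟩; exact hq w x⟩ h
      have i2 := le_ciSup (f := fun w : E => ⨆ h : E,
        ‖fderiv ℝ (fderiv ℝ g) (w + h) - fderiv ℝ (fderiv ℝ g) w‖ / ‖h‖)
        ⟨K, by rintro _ ⟨x, rfl⟩; exact ciSup_le fun h => hq x h⟩ w
      exact i1.trans i2

/-- Let `g ∈ M` with `E[g(D)] = 0` and
`φ(g)(w) = −∫₀^∞ (T_u g)(w) du`. Then for all `w, h ∈ E`:
(A) `‖Dφ(g)(w)‖ ≤ ‖g‖_M (1 + (2/3)‖w‖² + (4/3)E[‖D‖²])`;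
(B) `‖D²φ(g)(w)‖ ≤ ‖g‖_M (1/2 + ‖w‖/3 + E[‖D‖]/3)`;
(C) `‖D²φ(g)(w+h) − D²φ(g)(w)‖ ≤ (‖h‖/3) · sup_{w',h'} ‖D²g(w'+h') − D²g(w')‖/‖h'‖`. -/
theorem stmt_4 {E : Type*} [NormedAddCommGroup E] [NormedSpace ℝ E] [CompleteSpace E]
    [TopologicalSpace.SeparableSpace E]
    {Ω : Type*} [MeasureSpace Ω] [IsProbabilityMeasure (ℙ : Measure Ω)]
    (D : Ω → E) (hDmeas : AEStronglyMeasurable D ℙ)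
    (hD3 : Integrable (fun ω => ‖D ω‖ ^ 3) ℙ)
    (hDmean : (∫ ω, D ω ∂ℙ) = 0)
    (g : E → ℝ)
    (hg₁ : Differentiable ℝ g)
    (hg₂ : Differentiable ℝ (fderiv ℝ g))
    (C₀ : ℝ) (hC₀ : ∀ w : E, |g w| ≤ C₀ * (1 + ‖w‖ ^ 3))
    (kg : ℝ)
    (hkg : ∀ w h : E,
      ‖fderiv ℝ (fderiv ℝ g) (w + h) - fderiv ℝ (fderiv ℝ g) w‖ ≤ kg * ‖h‖)
    (hmean : (∫ ω, g (D ω) ∂ℙ) = 0)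
    (φ : E → ℝ)
    (hφ : φ = fun w : E => -∫ u in Set.Ioi (0 : ℝ),
      ∫ ω, g (Real.exp (-u) • w + Real.sqrt (1 - Real.exp (-2 * u)) • D ω) ∂ℙ) :
    (∀ w : E, ‖fderiv ℝ φ w‖
        ≤ Mnorm g * (1 + 2 / 3 * ‖w‖ ^ 2 + 4 / 3 * ∫ ω, ‖D ω‖ ^ 2 ∂ℙ)) ∧
    (∀ w : E, ‖fderiv ℝ (fderiv ℝ φ) w‖
        ≤ Mnorm g * (1 / 2 + ‖w‖ / 3 + (∫ ω, ‖D ω‖ ∂ℙ) / 3)) ∧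
    (∀ w h : E, ‖fderiv ℝ (fderiv ℝ φ) (w + h) - fderiv ℝ (fderiv ℝ φ) w‖
        ≤ ‖h‖ / 3 * ⨆ w' : E, ⨆ h' : E,
            ‖fderiv ℝ (fderiv ℝ g) (w' + h') - fderiv ℝ (fderiv ℝ g) w'‖ / ‖h'‖) := by
  obtain ⟨hN1, hN2, hN3⟩ := aux_sups g hg₂ kg hkg
  set N := Mnorm g with hN
  set K := ⨆ w' : E, ⨆ h' : E,
            ‖fderiv ℝ (fderiv ℝ g) (w' + h') - fderiv ℝ (fderiv ℝ g) w'‖ / ‖h'‖ with hK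
  have hN0 : 0 ≤ N := by
    have := (norm_nonneg _).trans (hN1 0)
    simpa using this
  have hc1 : Continuous (fderiv ℝ g) := hg₂.continuous
  have hc2 : Continuous (fderiv ℝ (fderiv ℝ g)) := by
    have : LipschitzWith K.toNNReal (fderiv ℝ (fderiv ℝ g)) := by
      apply LipschitzWith.of_dist_le_mul
      intro x y
      rw [dist_eq_norm, dist_eq_norm]
      have := hN3 y (x - y)
      rw [add_sub_cancel] at this
      refine this.trans ?_
      gcongr
      exact Real.le_coe_toNNReal K
    exact this.continuous
  -- moments
  have hD2 : Integrable (fun ω => ‖D ω‖ ^ 2) (ℙ : Measure Ω) := by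
    refine ((integrable_const (1 : ℝ)).add hD3).mono' (hDmeas.norm.pow 2) ?_
    refine Filter.Eventually.of_forall fun ω => ?_
    have h0 := norm_nonneg (D ω)
    simp only [norm_pow, norm_norm, Pi.add_apply]
    nlinarith [mul_nonneg h0 (sq_nonneg (‖D ω‖ - 1)), sq_nonneg (‖D ω‖ - 1)]
  have hD1 : Integrable (fun ω => ‖D ω‖) (ℙ : Measure Ω) := by
    refine ((integrable_const (1 : ℝ)).add hD2).mono' hDmeas.norm ?_
    refine Filter.Eventually.of_forall fun ω => ?_
    simp only [norm_norm, Pi.add_apply]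
    nlinarith [sq_nonneg (‖D ω‖ - 1)]
  set μ : Measure ℝ := volume.restrict (Set.Ioi 0) with hμ
  set ν : Measure (ℝ × Ω) := μ.prod ℙ with hν
  set a : ℝ → ℝ := fun u => Real.exp (-u) with ha
  set b : ℝ → ℝ := fun u => Real.sqrt (1 - Real.exp (-2 * u)) with hb
  have hpos : ∀ᵐ p ∂ν, 0 < p.1 := by
    have : ∀ᵐ u ∂μ, 0 < u := ae_restrict_mem measurableSet_Ioi
    exact Measure.quasiMeasurePreserving_fst.ae this
  have ha0 : ∀ u, 0 < a u := fun u => Real.exp_pos _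
  have ha1 : ∀ u, 0 < u → a u ≤ 1 := fun u hu => Real.exp_le_one_iff.2 (by linarith)
  have hb0 : ∀ u, 0 ≤ b u := fun u => Real.sqrt_nonneg _
  have hb2 : ∀ u, 0 < u → b u ^ 2 = 1 - a u ^ 2 := fun u hu => aux_b_sq u hu
  have hb1 : ∀ u, 0 < u → b u ≤ 1 := fun u hu => by
    have := hb2 u hu
    nlinarith [hb0 u, sq_nonneg (a u)]
  have hba : ∀ u, 0 < u → 1 - b u ≤ a u := fun u hu => by
    have := hb2 u hu
    nlinarith [hb0 u, ha0 u, ha1 u hu, hb1 u hu]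
  have hac : Continuous a := by fun_prop
  have hbc : Continuous b := by fun_prop
  have ham : AEStronglyMeasurable (fun p : ℝ × Ω => a p.1) ν :=
    (hac.measurable.comp measurable_fst).aestronglyMeasurable
  have hbm : AEStronglyMeasurable (fun p : ℝ × Ω => b p.1) ν :=
    (hbc.measurable.comp measurable_fst).aestronglyMeasurable
  have hDm : AEStronglyMeasurable (fun p : ℝ × Ω => D p.2) ν := hDmeas.comp_snd
  have hXm : AEStronglyMeasurable (fun p : ℝ × Ω => b p.1 • D p.2) ν := hbm.smul hDm
  have iα1 : Integrable a μ ∧ ∫ u, a u ∂μ = 1 := by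
    have h := aux_exp 1 (by norm_num)
    simp only [pow_one, Nat.cast_one, div_one] at h
    exact h
  have iα2 : Integrable (fun u => a u ^ 2) μ ∧ ∫ u, a u ^ 2 ∂μ = 1 / 2 := by
    simpa using aux_exp 2 (by norm_num)
  have iα3 : Integrable (fun u => a u ^ 3) μ ∧ ∫ u, a u ^ 3 ∂μ = 1 / 3 := by
    simpa using aux_exp 3 (by norm_num)
  have iab2 : Integrable (fun u => a u * b u ^ 2) μ ∧ ∫ u, a u * b u ^ 2 ∂μ = 2 / 3 := aux_ab2
  have ia2b : Integrable (fun u => a u ^ 2 * b u) μ ∧ ∫ u, a u ^ 2 * b u ∂μ = 1 / 3 := aux_a2b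
  -- integrability of g along the flow
  have hgc : Continuous g := hg₁.continuous
  have hgi : ∀ (s t : ℝ) (w : E), Integrable (fun ω => g (s • w + t • D ω)) (ℙ : Measure Ω) := by
    intro s t w
    have hC0 : 0 ≤ C₀ := by
      have := (abs_nonneg _).trans (hC₀ 0)
      simpa using this
    have hi : Integrable (fun ω => C₀ * (1 + 4 * ‖s • w‖ ^ 3) + C₀ * 4 * |t| ^ 3 * ‖D ω‖ ^ 3)
        (ℙ : Measure Ω) := (integrable_const _).add (hD3.const_mul _)
    refine hi.mono' (hgc.comp_aestronglyMeasurable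
      (aestronglyMeasurable_const.add (hDmeas.const_smul t))) ?_
    refine Filter.Eventually.of_forall fun ω => ?_
    rw [Real.norm_eq_abs]
    refine (hC₀ _).trans ?_
    have h1 : ‖s • w + t • D ω‖ ≤ ‖s • w‖ + |t| * ‖D ω‖ := by
      refine (norm_add_le _ _).trans ?_
      rw [norm_smul t, Real.norm_eq_abs]
    have h2 : ‖s • w + t • D ω‖ ^ 3 ≤ 4 * (‖s • w‖ ^ 3 + (|t| * ‖D ω‖) ^ 3) := by
      refine (pow_le_pow_left₀ (norm_nonneg _) h1 3).trans ?_
      have := add_pow_le (norm_nonneg (s • w)) (by positivity : 0 ≤ |t| * ‖D ω‖) 3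
      norm_num at this ⊢
      exact this
    calc C₀ * (1 + ‖s • w + t • D ω‖ ^ 3)
        ≤ C₀ * (1 + 4 * (‖s • w‖ ^ 3 + (|t| * ‖D ω‖) ^ 3)) := by gcongr
      _ = _ := by ring
  have hgD : Integrable (fun ω => g (D ω)) (ℙ : Measure Ω) := by
    simpa using hgi 0 1 0
  have hint0 : ∀ w : E, Integrable
      (fun p : ℝ × Ω => g (a p.1 • w + b p.1 • D p.2) - g (D p.2)) ν := by
    intro w
    have hi : Integrable (fun p : ℝ × Ω =>
        N * (1 + 8 * ‖w‖ ^ 3) * a p.1 + a p.1 * (N * 8 * ‖D p.2‖ ^ 3)) ν :=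
      (aux_int3 μ ℙ (fun u => N * (1 + 8 * ‖w‖ ^ 3) * a u) a (fun ω => N * 8 * ‖D ω‖ ^ 3)
        (iα1.1.const_mul _) iα1.1 (hD3.const_mul _)).1
    refine hi.mono' ((hgc.comp_aestronglyMeasurable ((ham.smul_const w).add hXm)).sub
      (hgc.comp_aestronglyMeasurable hDm)) ?_
    filter_upwards [hpos] with p hp
    have A0 := ha0 p.1
    have A1 := ha1 p.1 hp
    have B0 := hb0 p.1
    have B1 := hb1 p.1 hp
    have BA := hba p.1 hp
    set r := ‖w‖ + ‖D p.2‖ with hr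
    have hr0 : 0 ≤ r := by positivity
    have hmem : ‖a p.1 • w + b p.1 • D p.2‖ ≤ r := by
      refine (norm_add_le _ _).trans ?_
      rw [norm_smul, norm_smul, Real.norm_of_nonneg A0.le, Real.norm_of_nonneg B0]
      have := mul_le_of_le_one_left (norm_nonneg w) A1
      have := mul_le_of_le_one_left (norm_nonneg (D p.2)) B1
      linarith
    have hmv := Convex.norm_image_sub_le_of_norm_fderiv_le (𝕜 := ℝ) (f := g)
      (s := Metric.closedBall 0 r) (x := D p.2) (y := a p.1 • w + b p.1 • D p.2)
      (C := N * (1 + r ^ 2))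
      (fun x _ => hg₁ x) (fun x hx => (hN1 x).trans (by
        have : ‖x‖ ≤ r := by simpa using hx
        gcongr)) (convex_closedBall _ _) (by simp [hr]) (by simpa using hmem)
    have hdiff : ‖a p.1 • w + b p.1 • D p.2 - D p.2‖ ≤ a p.1 * r := by
      have e : a p.1 • w + b p.1 • D p.2 - D p.2 = a p.1 • w - (1 - b p.1) • D p.2 := by
        rw [sub_smul, one_smul]; abel
      rw [e]
      refine (norm_sub_le _ _).trans ?_
      rw [norm_smul, norm_smul, Real.norm_of_nonneg A0.le, Real.norm_of_nonneg (by linarith), hr,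
        mul_add]
      gcongr
    refine hmv.trans ?_
    have hr3 : r ^ 3 ≤ 4 * (‖w‖ ^ 3 + ‖D p.2‖ ^ 3) := by
      have := add_pow_le (norm_nonneg w) (norm_nonneg (D p.2)) 3
      norm_num at this ⊢
      exact this
    have hr1 : (1 + r ^ 2) * r ≤ 1 + 2 * r ^ 3 := by
      nlinarith [mul_nonneg hr0 (sq_nonneg (r - 1)), sq_nonneg (r - 1)]
    calc N * (1 + r ^ 2) * ‖a p.1 • w + b p.1 • D p.2 - D p.2‖
        ≤ N * (1 + r ^ 2) * (a p.1 * r) := by gcongr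
      _ = N * a p.1 * ((1 + r ^ 2) * r) := by ring
      _ ≤ N * a p.1 * (1 + 2 * (4 * (‖w‖ ^ 3 + ‖D p.2‖ ^ 3))) := by
          gcongr
          linarith
      _ = _ := by ring
  have hφ' : φ = fun w => -∫ p, ((1 : ℝ) • g (a p.1 • w + b p.1 • D p.2) - g (D p.2)) ∂ν := by
    rw [hφ]
    funext w
    simp only [one_smul]
    rw [integral_prod _ (hint0 w)]
    congr 1
    apply integral_congr_ae
    refine Filter.Eventually.of_forall fun u => ?_
    simp only
    rw [integral_sub (hgi _ _ _) hgD, hmean, sub_zero]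
  have iX : ∀ w : E, ∀ c : ℝ → ℝ, Integrable c μ → Continuous c → (∀ u, 0 ≤ c u) →
      Integrable (fun p : ℝ × Ω => c p.1) ν ∧
      Integrable (fun p : ℝ × Ω => c p.1 * ‖b p.1 • D p.2‖ ^ 2) ν := by
    intro w c hc hcc hc0
    refine ⟨hc.comp_fst _, ?_⟩
    refine (hc.mul_prod hD2).mono' ?_ ?_
    · exact ((hcc.measurable.comp measurable_fst).aestronglyMeasurable).mul (hXm.norm.pow 2)
    · filter_upwards [hpos] with p hp
      rw [Real.norm_of_nonneg (mul_nonneg (hc0 _) (by positivity))]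
      rw [norm_smul, Real.norm_of_nonneg (hb0 _)]
      have := mul_le_of_le_one_left (norm_nonneg (D p.2)) (hb1 _ hp)
      have h3 := hb0 p.1
      have h4 := hc0 p.1
      gcongr
  have haabs : ∀ᵐ p ∂ν, |a p.1| ≤ 1 := by
    filter_upwards [hpos] with p hp
    rw [abs_of_pos (ha0 _)]; exact ha1 _ hp
  have st1 := aux_step ν (fun _ => (1 : ℝ)) (fun p : ℝ × Ω => a p.1)
    (fun p => b p.1 • D p.2) (fun p => g (D p.2)) g hg₁ hc1 N hN1 aestronglyMeasurable_const
    ham hXm haabs (by simpa using hint0)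
    (by simpa [abs_of_pos (ha0 _)] using (iX 0 a iα1.1 hac fun u => (ha0 u).le).1)
    (by simpa only [one_mul, abs_of_pos (ha0 _)] using
      (iX 0 a iα1.1 hac fun u => (ha0 u).le).2)
  have hf1 : ∀ w, HasFDerivAt φ
      (-∫ p, (1 * a p.1) • fderiv ℝ g (a p.1 • w + b p.1 • D p.2) ∂ν) w := by
    intro w
    rw [hφ']
    exact (st1 w).2.neg
  have hfd1 : fderiv ℝ φ = fun w =>
      -∫ p, (a p.1 • fderiv ℝ g (a p.1 • w + b p.1 • D p.2) - 0) ∂ν := by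
    funext w
    rw [(hf1 w).fderiv]
    simp
  have hab2 : ∀ u, |a u * a u| = a u ^ 2 := fun u => by
    rw [abs_of_pos (mul_pos (ha0 u) (ha0 u))]; ring
  have st2 := aux_step ν (fun p : ℝ × Ω => a p.1) (fun p : ℝ × Ω => a p.1)
    (fun p => b p.1 • D p.2) (fun p => 0) (fderiv ℝ g) hg₂ hc2 (2 * N)
    (fun w => (hN2 w).trans (by
      have : ‖w‖ ≤ 1 + 2 * ‖w‖ ^ 2 := by nlinarith [sq_nonneg (‖w‖ - 1)]
      nlinarith)) ham
    ham hXm haabs (fun w => by simpa using (st1 w).1)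
    (by simpa only [hab2] using
      (iX 0 (fun u => a u ^ 2) iα2.1 (hac.pow 2) fun u => by positivity).1)
    (by simpa only [hab2] using
      (iX 0 (fun u => a u ^ 2) iα2.1 (hac.pow 2) fun u => by positivity).2)
  have hfd2 : ∀ w, fderiv ℝ (fderiv ℝ φ) w =
      -∫ p, (a p.1 * a p.1) • fderiv ℝ (fderiv ℝ g) (a p.1 • w + b p.1 • D p.2) ∂ν := by
    intro w
    rw [hfd1]
    exact (st2 w).2.neg.fderiv
  refine ⟨fun w => ?_, fun w => ?_, fun w h => ?_⟩
  · rw [(hf1 w).fderiv, norm_neg]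
    have I := aux_int3 μ ℙ (fun u => N * a u + 2 * N * ‖w‖ ^ 2 * a u ^ 3)
      (fun u => 2 * N * (a u * b u ^ 2)) (fun ω => ‖D ω‖ ^ 2)
      ((iα1.1.const_mul _).add (iα3.1.const_mul _)) (iab2.1.const_mul _) hD2
    refine (norm_integral_le_of_norm_le I.1 ?_).trans (le_of_eq ?_)
    · refine Filter.Eventually.of_forall fun p => ?_
      have A0 := ha0 p.1
      have B0 := hb0 p.1
      rw [one_mul, norm_smul, Real.norm_of_nonneg A0.le]
      have h1 : ‖a p.1 • w + b p.1 • D p.2‖ ≤ a p.1 * ‖w‖ + b p.1 * ‖D p.2‖ := by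
        refine (norm_add_le _ _).trans ?_
        rw [norm_smul, norm_smul, Real.norm_of_nonneg A0.le, Real.norm_of_nonneg B0]
      have h2 : ‖a p.1 • w + b p.1 • D p.2‖ ^ 2
          ≤ 2 * (a p.1 * ‖w‖) ^ 2 + 2 * (b p.1 * ‖D p.2‖) ^ 2 := by
        refine (pow_le_pow_left₀ (norm_nonneg _) h1 2).trans ?_
        nlinarith [sq_nonneg (a p.1 * ‖w‖ - b p.1 * ‖D p.2‖)]
      calc a p.1 * ‖fderiv ℝ g (a p.1 • w + b p.1 • D p.2)‖
          ≤ a p.1 * (N * (1 + (2 * (a p.1 * ‖w‖) ^ 2 + 2 * (b p.1 * ‖D p.2‖) ^ 2))) := by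
            gcongr
            exact (hN1 _).trans (by gcongr)
        _ = _ := by ring
    · rw [I.2, integral_add (iα1.1.const_mul _) (iα3.1.const_mul _), integral_const_mul,
        integral_const_mul, integral_const_mul, iα1.2, iα3.2, iab2.2]
      ring
  · rw [hfd2 w]
    refine (le_of_eq (norm_neg (∫ p, (a p.1 * a p.1) •
      fderiv ℝ (fderiv ℝ g) (a p.1 • w + b p.1 • D p.2) ∂ν))).trans ?_
    have I := aux_int3 μ ℙ (fun u => N * a u ^ 2 + N * ‖w‖ * a u ^ 3)
      (fun u => N * (a u ^ 2 * b u)) (fun ω => ‖D ω‖)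
      ((iα2.1.const_mul _).add (iα3.1.const_mul _)) (ia2b.1.const_mul _) hD1
    refine (norm_integral_le_of_norm_le I.1 ?_).trans (le_of_eq ?_)
    · refine Filter.Eventually.of_forall fun p => ?_
      have A0 := ha0 p.1
      have B0 := hb0 p.1
      have h1 : ‖a p.1 • w + b p.1 • D p.2‖ ≤ a p.1 * ‖w‖ + b p.1 * ‖D p.2‖ := by
        refine (norm_add_le _ _).trans ?_
        rw [norm_smul, norm_smul, Real.norm_of_nonneg A0.le, Real.norm_of_nonneg B0]
      have h2 : ‖fderiv ℝ (fderiv ℝ g) (a p.1 • w + b p.1 • D p.2)‖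
          ≤ N * (1 + (a p.1 * ‖w‖ + b p.1 * ‖D p.2‖)) := (hN2 _).trans (by gcongr)
      refine (aux_nsle (a p.1 * a p.1) _ (fderiv ℝ (fderiv ℝ g) (a p.1 • w + b p.1 • D p.2))
        h2).trans (le_of_eq ?_)
      rw [hab2]
      ring
    · rw [I.2, integral_add (iα2.1.const_mul _) (iα3.1.const_mul _), integral_const_mul,
        integral_const_mul, integral_const_mul, iα2.2, iα3.2, ia2b.2]
      ring
  · rw [hfd2, hfd2, neg_sub_neg]
    refine (le_of_eq (norm_sub_rev
      (∫ p, (a p.1 * a p.1) • fderiv ℝ (fderiv ℝ g) (a p.1 • w + b p.1 • D p.2) ∂ν)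
      (∫ p, (a p.1 * a p.1) • fderiv ℝ (fderiv ℝ g) (a p.1 • (w + h) + b p.1 • D p.2) ∂ν))).trans ?_
    rw [← integral_sub (st2 (w + h)).1 (st2 w).1]
    have I := aux_int3 μ ℙ (fun u => K * ‖h‖ * a u ^ 3) (fun _ => 0) (fun ω => ‖D ω‖)
      (iα3.1.const_mul _) (integrable_zero _ _ _) hD1
    refine (norm_integral_le_of_norm_le I.1 ?_).trans (le_of_eq ?_)
    · refine Filter.Eventually.of_forall fun p => ?_
      have A0 := ha0 p.1
      have e : a p.1 • (w + h) + b p.1 • D p.2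
          = (a p.1 • w + b p.1 • D p.2) + a p.1 • h := by
        rw [smul_add]; abel
      rw [e]
      have := hN3 (a p.1 • w + b p.1 • D p.2) (a p.1 • h)
      rw [norm_smul (a p.1) h, Real.norm_of_nonneg A0.le] at this
      refine (aux_nsle2 (a p.1 * a p.1) _
        (fderiv ℝ (fderiv ℝ g) (a p.1 • w + b p.1 • D p.2 + a p.1 • h))
        (fderiv ℝ (fderiv ℝ g) (a p.1 • w + b p.1 • D p.2)) this).trans (le_of_eq ?_)
      rw [hab2]
      ring
    · rw [I.2, integral_const_mul, iα3.2]
      simp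
      ring
end
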